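/- If a and b are terms of Λ× of the same type and a = b is not provable in Λ×, then for every two terms c and d of the same type of Λ× one can construct type-instances a′ of a and b′ of b, terms h, h₁, …, hₙ (n ≥ 0), and find variables x₁, …, x_m (m ≥ 0) and a natural number i such that π^i(h λx₁…x_m.a′)h₁…hₙ = c and π^i(h λx₁…x_m.b′)h₁…hₙ = d are provable in Λ×. -/

import Mathlib

set_option autoImplicit false

/-- Types of the typed lambda calculus Λ× : generated from atomic types (`ν`) and the
constant atomic type `T` by `→` and `×`. -/
inductive Tyx (ν : Type) : Type
  | atom : ν → Tyx ν
  | unit : Tyx ν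
  | arrow : Tyx ν → Tyx ν → Tyx ν
  | prod : Tyx ν → Tyx ν → Tyx ν

/-- A typing context. -/
abbrev Ctxx (ν : Type) : Type := List (Tyx ν)

/-- Typed de Bruijn variables. -/
inductive Varx {ν : Type} : Ctxx ν → Tyx ν → Type
  | vz {Γ : Ctxx ν} {A : Tyx ν} : Varx (A :: Γ) A
  | vs {Γ : Ctxx ν} {A B : Tyx ν} : Varx Γ A → Varx (B :: Γ) A

/-- Typed terms of Λ×. -/
inductive Tmx {ν : Type} : Ctxx ν → Tyx ν → Type
  | var {Γ : Ctxx ν} {A : Tyx ν} : Varx Γ A → Tmx Γ A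
  | app {Γ : Ctxx ν} {A B : Tyx ν} : Tmx Γ (Tyx.arrow A B) → Tmx Γ A → Tmx Γ B
  | lam {Γ : Ctxx ν} {A B : Tyx ν} : Tmx (A :: Γ) B → Tmx Γ (Tyx.arrow A B)
  | pair {Γ : Ctxx ν} {A B : Tyx ν} : Tmx Γ A → Tmx Γ B → Tmx Γ (Tyx.prod A B)
  | p1 {Γ : Ctxx ν} {A B : Tyx ν} : Tmx Γ (Tyx.prod A B) → Tmx Γ A
  | p2 {Γ : Ctxx ν} {A B : Tyx ν} : Tmx Γ (Tyx.prod A B) → Tmx Γ B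
  | k {Γ : Ctxx ν} : Tmx Γ Tyx.unit

/-- Renamings between contexts. -/
def Renx {ν : Type} (Γ Δ : Ctxx ν) : Type := ∀ A : Tyx ν, Varx Γ A → Varx Δ A

def Renx.ext {ν : Type} {Γ Δ : Ctxx ν} (ρ : Renx Γ Δ) (A : Tyx ν) :
    ∀ B : Tyx ν, Varx (A :: Γ) B → Varx (A :: Δ) B
  | _, .vz => .vz
  | _, .vs w => .vs (ρ _ w)

def Tmx.rename {ν : Type} : ∀ {Γ Δ : Ctxx ν} {A : Tyx ν}, Renx Γ Δ → Tmx Γ A → Tmx Δ A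
  | _, _, _, ρ, .var v => .var (ρ _ v)
  | _, _, _, ρ, .app f a => .app (f.rename ρ) (a.rename ρ)
  | _, _, _, ρ, .lam b => .lam (b.rename (Renx.ext ρ _))
  | _, _, _, ρ, .pair a b => .pair (a.rename ρ) (b.rename ρ)
  | _, _, _, ρ, .p1 a => .p1 (a.rename ρ)
  | _, _, _, ρ, .p2 a => .p2 (a.rename ρ)
  | _, _, _, _, .k => .k

/-- Simultaneous substitutions. -/
def Substx {ν : Type} (Γ Δ : Ctxx ν) : Type := ∀ A : Tyx ν, Varx Γ A → Tmx Δ A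

def Substx.ext {ν : Type} {Γ Δ : Ctxx ν} (σ : Substx Γ Δ) (A : Tyx ν) :
    ∀ B : Tyx ν, Varx (A :: Γ) B → Tmx (A :: Δ) B
  | _, .vz => .var .vz
  | _, .vs w => (σ _ w).rename (fun _ => Varx.vs)

def Tmx.subst {ν : Type} : ∀ {Γ Δ : Ctxx ν} {A : Tyx ν}, Substx Γ Δ → Tmx Γ A → Tmx Δ A
  | _, _, _, σ, .var v => σ _ v
  | _, _, _, σ, .app f a => .app (f.subst σ) (a.subst σ)
  | _, _, _, σ, .lam b => .lam (b.subst (Substx.ext σ _))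
  | _, _, _, σ, .pair a b => .pair (a.subst σ) (b.subst σ)
  | _, _, _, σ, .p1 a => .p1 (a.subst σ)
  | _, _, _, σ, .p2 a => .p2 (a.subst σ)
  | _, _, _, _, .k => .k

def Substx.cons {ν : Type} {Γ Δ : Ctxx ν} {A : Tyx ν} (b : Tmx Δ A) (σ : Substx Γ Δ) :
    ∀ B : Tyx ν, Varx (A :: Γ) B → Tmx Δ B
  | _, .vz => b
  | _, .vs w => σ _ w

/-- Substitution of a single term for the last variable: `a[b/x]`. -/
def Tmx.subst1 {ν : Type} {Γ : Ctxx ν} {A B : Tyx ν} (a : Tmx (A :: Γ) B) (b : Tmx Γ A) :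
    Tmx Γ B :=
  a.subst (Substx.cons b (fun _ v => .var v))

/-- The theory Λ× of βη-equality with surjective pairing and terminal type `T`. -/
inductive Eqvx {ν : Type} : ∀ {Γ : Ctxx ν} {A : Tyx ν}, Tmx Γ A → Tmx Γ A → Prop
  | refl {Γ : Ctxx ν} {A : Tyx ν} (a : Tmx Γ A) : Eqvx a a
  | symm {Γ : Ctxx ν} {A : Tyx ν} {a b : Tmx Γ A} : Eqvx a b → Eqvx b a
  | trans {Γ : Ctxx ν} {A : Tyx ν} {a b c : Tmx Γ A} : Eqvx a b → Eqvx b c → Eqvx a c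
  | congApp {Γ : Ctxx ν} {A B : Tyx ν} {f g : Tmx Γ (Tyx.arrow A B)} {a b : Tmx Γ A} :
      Eqvx f g → Eqvx a b → Eqvx (.app f a) (.app g b)
  | congLam {Γ : Ctxx ν} {A B : Tyx ν} {a b : Tmx (A :: Γ) B} :
      Eqvx a b → Eqvx (.lam a) (.lam b)
  | congPair {Γ : Ctxx ν} {A B : Tyx ν} {a a' : Tmx Γ A} {b b' : Tmx Γ B} :
      Eqvx a a' → Eqvx b b' → Eqvx (.pair a b) (.pair a' b')
  | congP1 {Γ : Ctxx ν} {A B : Tyx ν} {a b : Tmx Γ (Tyx.prod A B)} :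
      Eqvx a b → Eqvx (.p1 a) (.p1 b)
  | congP2 {Γ : Ctxx ν} {A B : Tyx ν} {a b : Tmx Γ (Tyx.prod A B)} :
      Eqvx a b → Eqvx (.p2 a) (.p2 b)
  | beta {Γ : Ctxx ν} {A B : Tyx ν} (a : Tmx (A :: Γ) B) (b : Tmx Γ A) :
      Eqvx (.app (.lam a) b) (a.subst1 b)
  | eta {Γ : Ctxx ν} {A B : Tyx ν} (a : Tmx Γ (Tyx.arrow A B)) :
      Eqvx (.lam (.app (a.rename (fun _ => Varx.vs)) (.var .vz))) a
  | prodBeta1 {Γ : Ctxx ν} {A B : Tyx ν} (a : Tmx Γ A) (b : Tmx Γ B) :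
      Eqvx (.p1 (.pair a b)) a
  | prodBeta2 {Γ : Ctxx ν} {A B : Tyx ν} (a : Tmx Γ A) (b : Tmx Γ B) :
      Eqvx (.p2 (.pair a b)) b
  | prodEta {Γ : Ctxx ν} {A B : Tyx ν} (c : Tmx Γ (Tyx.prod A B)) :
      Eqvx (.pair (.p1 c) (.p2 c)) c
  | unit {Γ : Ctxx ν} (a : Tmx Γ Tyx.unit) : Eqvx a .k

def Varx.elim0 {ν : Type} {A : Tyx ν} {C : Sort*} : Varx ([] : Ctxx ν) A → C :=
  fun v => nomatch v

/-- Weakening of a closed term into an arbitrary context. -/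
def Tmx.wk {ν : Type} {Δ : Ctxx ν} {A : Tyx ν} (t : Tmx ([] : Ctxx ν) A) : Tmx Δ A :=
  t.rename (fun _ v => v.elim0)

/-- One-step reduction of types of Λ× (replacement of a redex subtype by its
contractum). -/
inductive TyStep {ν : Type} : Tyx ν → Tyx ν → Prop
  | arrProd (A B₁ B₂ : Tyx ν) :
      TyStep (.arrow A (.prod B₁ B₂)) (.prod (.arrow A B₁) (.arrow A B₂))
  | prodArr (A₁ A₂ B : Tyx ν) :
      TyStep (.arrow (.prod A₁ A₂) B) (.arrow A₁ (.arrow A₂ B))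
  | prodAssoc (A B C : Tyx ν) :
      TyStep (.prod A (.prod B C)) (.prod (.prod A B) C)
  | arrUnit (A : Tyx ν) : TyStep (.arrow A .unit) .unit
  | unitArr (B : Tyx ν) : TyStep (.arrow .unit B) B
  | prodUnit (A : Tyx ν) : TyStep (.prod A .unit) A
  | unitProd (A : Tyx ν) : TyStep (.prod .unit A) A
  | arrL {A A' : Tyx ν} (B : Tyx ν) : TyStep A A' → TyStep (.arrow A B) (.arrow A' B)
  | arrR (A : Tyx ν) {B B' : Tyx ν} : TyStep B B' → TyStep (.arrow A B) (.arrow A B')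
  | prodL {A A' : Tyx ν} (B : Tyx ν) : TyStep A A' → TyStep (.prod A B) (.prod A' B)
  | prodR (A : Tyx ν) {B B' : Tyx ν} : TyStep B B' → TyStep (.prod A B) (.prod A B')

/-- A type is in product normal form iff none of its subtypes is a redex, i.e. iff no
type reduction applies to it. -/
def PNF {ν : Type} (A : Tyx ν) : Prop := ∀ B : Tyx ν, ¬ TyStep A B

/-- Substitution of types for the atomic types, on types of Λ×. -/
def Tyx.substA {ν : Type} (σ : ν → Tyx ν) : Tyx ν → Tyx ν
  | .atom v => σ v
  | .unit => .unit
  | .arrow A B => .arrow (A.substA σ) (B.substA σ)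
  | .prod A B => .prod (A.substA σ) (B.substA σ)

def Varx.substA {ν : Type} (σ : ν → Tyx ν) :
    ∀ {Γ : Ctxx ν} {A : Tyx ν}, Varx Γ A → Varx (Γ.map (Tyx.substA σ)) (A.substA σ)
  | _, _, .vz => .vz
  | _, _, .vs v => .vs (v.substA σ)

/-- Substitution of types for the atomic types, on terms of Λ× : type-instances. -/
def Tmx.substA {ν : Type} (σ : ν → Tyx ν) :
    ∀ {Γ : Ctxx ν} {A : Tyx ν}, Tmx Γ A → Tmx (Γ.map (Tyx.substA σ)) (A.substA σ)
  | _, _, .var v => .var (v.substA σ)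
  | _, _, .app f a => .app (f.substA σ) (a.substA σ)
  | _, _, .lam b => .lam (b.substA σ)
  | _, _, .pair a b => .pair (a.substA σ) (b.substA σ)
  | _, _, .p1 a => .p1 (a.substA σ)
  | _, _, .p2 a => .p2 (a.substA σ)
  | _, _, .k => .k

/-- `Tyx.arrs [A₁, …, Aₘ] B = Aₘ → (… → (A₁ → B))` : the type of `λx₁…xₘ.a`. -/
def Tyx.arrs {ν : Type} : Ctxx ν → Tyx ν → Tyx ν
  | [], B => B
  | A :: Γ, B => Tyx.arrs Γ (Tyx.arrow A B)

/-- λ-abstracting all the free variables of a term of Λ×. -/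
def Tmx.lamAll {ν : Type} : ∀ {Γ : Ctxx ν} {A : Tyx ν}, Tmx Γ A → Tmx [] (Tyx.arrs Γ A)
  | [], _, a => a
  | _ :: Γ, _, a => Tmx.lamAll (Γ := Γ) (Tmx.lam a)

/-- `Tyx.arrsR [B₁, …, Bₙ] C = B₁ → (… → (Bₙ → C))`. -/
def Tyx.arrsR {ν : Type} : List (Tyx ν) → Tyx ν → Tyx ν
  | [], C => C
  | B :: Bs, C => Tyx.arrow B (Tyx.arrsR Bs C)

/-- A list of terms `h₁ : B₁, …, hₙ : Bₙ` in context `Δ`. -/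
inductive HListx {ν : Type} (Δ : Ctxx ν) : List (Tyx ν) → Type
  | nil : HListx Δ []
  | cons {B : Tyx ν} {Bs : List (Tyx ν)} : Tmx Δ B → HListx Δ Bs → HListx Δ (B :: Bs)

def HListx.apps {ν : Type} {Δ : Ctxx ν} :
    ∀ {Bs : List (Tyx ν)} {C : Tyx ν}, HListx Δ Bs → Tmx Δ (Tyx.arrsR Bs C) → Tmx Δ C
  | _, _, .nil, t => t
  | _, _, .cons h hs, t => HListx.apps hs (t.app h)

/-- Iterated application `t h₁ … hₙ`. -/
def Tmx.apps {ν : Type} {Δ : Ctxx ν} {Bs : List (Tyx ν)} {C : Tyx ν}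
    (t : Tmx Δ (Tyx.arrsR Bs C)) (hs : HListx Δ Bs) : Tmx Δ C :=
  hs.apps t

/-- `PiStep n i t u` : regarding the type of `t` as an iterated product
`×_{j=1}^n A_j` (left-nested, `n ≥ 1`), `u` is the `i`-th projection `π^i t`
(for `1 ≤ i ≤ n`): `π^i t = t` if `n = 1`, and for `n > 1`, `πⁿ t = p² t` and
`π^i t = π^i (p¹ t)` for `i < n`. -/
inductive PiStep {ν : Type} {Γ : Ctxx ν} : ℕ → ℕ → ∀ {A B : Tyx ν}, Tmx Γ A → Tmx Γ B → Prop
  | one {A : Tyx ν} (t : Tmx Γ A) : PiStep 1 1 t t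
  | last {n : ℕ} {A B : Tyx ν} (t : Tmx Γ (Tyx.prod A B)) : PiStep (n + 1) (n + 1) t (.p2 t)
  | lower {n i : ℕ} {A B C : Tyx ν} (t : Tmx Γ (Tyx.prod A B)) {u : Tmx Γ C} :
      PiStep n i (.p1 t) u → PiStep (n + 1) i t u

/-!
Every term has an η-long β-normal form, and distinct normal forms of one type in one context have
distinct Gödel codes, so terms that are not provably equal are told apart by a natural number. The
calculus can compute this number once the atomic types are instantiated suitably. Given a target
type `C` and a bound `N`, the projections `C^(N+1) → C` serve as the numerals `0, …, N`, and a
binary operation on numerals is a table of projections. Replacing every atom by the type of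
functions from numerals to numerals, from de Bruijn levels to codes, makes the two maps of
normalization by evaluation definable as terms by recursion on types; the closed term that reifies
its argument at level `0` then sends a type-instance of a closed term to the numeral of the code
of its normal form. Applied to an `(N+1)`-tuple of terms of type `C`, this numeral selects the
component at the code, which can be prescribed at will.
-/

-- The lemmas below spell out renamings and substitutions as functions of a type and a variable,
-- which `rw` and `simp` accept as members of `Renx` and `Substx` only up to reducible unfolding.
attribute [reducible] Renx Substx

variable {ν : Type} {Γ Δ Θ : Ctxx ν} {A B C : Tyx ν}

/-! ### Substitution -/

namespace Tmx

/-- Weakening of a term by one variable. -/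
def shift (t : Tmx Γ A) : Tmx (B :: Γ) A :=
  t.rename fun _ => Varx.vs

theorem rename_rename (t : Tmx Γ A) (ρ : Renx Γ Δ) (ρ' : Renx Δ Θ) :
    (t.rename ρ).rename ρ' = t.rename fun B v => ρ' B (ρ B v) := by
  induction t generalizing Δ Θ with
  | lam b ih =>
    simp only [rename, ih]
    congr 2
    funext B v
    cases v <;> rfl
  | _ => simp_all only [rename]

theorem subst_rename (t : Tmx Γ A) (ρ : Renx Γ Δ) (θ : Substx Δ Θ) :
    (t.rename ρ).subst θ = t.subst fun B v => θ B (ρ B v) := by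
  induction t generalizing Δ Θ with
  | lam b ih =>
    simp only [rename, subst, ih]
    congr 2
    funext B v
    cases v <;> rfl
  | _ => simp_all only [rename, subst]

theorem rename_subst (t : Tmx Γ A) (θ : Substx Γ Δ) (ρ : Renx Δ Θ) :
    (t.subst θ).rename ρ = t.subst fun B v => (θ B v).rename ρ := by
  induction t generalizing Δ Θ with
  | lam b ih =>
    simp only [rename, subst, ih]
    congr 2
    funext B v
    cases v with
    | vz => rfl
    | vs w => simp only [Substx.ext, rename_rename, Renx.ext]
  | _ => simp_all only [rename, subst]

theorem subst_subst (t : Tmx Γ A) (θ : Substx Γ Δ) (τ : Substx Δ Θ) :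
    (t.subst θ).subst τ = t.subst fun B v => (θ B v).subst τ := by
  induction t generalizing Δ Θ with
  | lam b ih =>
    simp only [subst, ih]
    congr 2
    funext B v
    cases v with
    | vz => rfl
    | vs w => simp only [Substx.ext, rename_subst, subst_rename]
  | _ => simp_all only [subst]

theorem subst_var (t : Tmx Γ A) : t.subst (fun _ v => .var v) = t := by
  induction t with
  | @lam Γ A B b ih =>
    have ext_var : Substx.ext (fun _ (v : Varx Γ _) => var v) A = fun _ v => var v := by
      funext B v
      cases v <;> rfl
    rw [subst, ext_var, ih]
  | _ => simp_all only [subst]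

theorem rename_eq_subst (t : Tmx Γ A) (ρ : Renx Γ Δ) :
    t.rename ρ = t.subst fun B v => .var (ρ B v) := by
  rw [← subst_var (t.rename ρ), subst_rename]

theorem shift_rename_ext (t : Tmx Γ A) (ρ : Renx Γ Δ) :
    t.shift.rename (Renx.ext ρ B) = (t.rename ρ).shift := by
  simp only [shift, rename_rename, Renx.ext]

theorem shift_subst_ext (t : Tmx Γ A) (θ : Substx Γ Δ) :
    t.shift.subst (Substx.ext θ B) = (t.subst θ).shift := by
  simp only [shift, subst_rename, rename_subst, Substx.ext]

theorem shift_subst_cons (t : Tmx Γ A) (u : Tmx Δ B) (θ : Substx Γ Δ) :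
    t.shift.subst (Substx.cons u θ) = t.subst θ := by
  simp only [shift, subst_rename, Substx.cons]

theorem rename_subst1 (a : Tmx (A :: Γ) B) (b : Tmx Γ A) (ρ : Renx Γ Δ) :
    (a.subst1 b).rename ρ = (a.rename (Renx.ext ρ A)).subst1 (b.rename ρ) := by
  rw [subst1, subst1, rename_subst, subst_rename]
  congr 1
  funext C v
  cases v <;> rfl

theorem subst_ext_subst1 (a : Tmx (A :: Γ) B) (b : Tmx Δ A) (θ : Substx Γ Δ) :
    (a.subst (Substx.ext θ A)).subst1 b = a.subst (Substx.cons b θ) := by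
  rw [subst1, subst_subst]
  congr 1
  funext C v
  cases v with
  | vz => rfl
  | vs w => exact (shift_subst_cons _ _ _).trans (subst_var _)

theorem rename_ext_shift_subst1_var (t : Tmx (A :: Γ) B) :
    (t.rename (Renx.ext (fun _ => Varx.vs) A)).subst1 (.var .vz) = t := by
  rw [subst1, subst_rename]
  refine Eq.trans ?_ (subst_var t)
  congr 1
  funext C v
  cases v <;> rfl

theorem substA_rename (σ : ν → Tyx ν) (t : Tmx Γ A) (ρ : Renx Γ Δ)
    (ρ' : Renx (Γ.map (Tyx.substA σ)) (Δ.map (Tyx.substA σ)))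
    (h : ∀ B (v : Varx Γ B), ρ' _ (v.substA σ) = (ρ B v).substA σ) :
    (t.rename ρ).substA σ = (t.substA σ).rename ρ' := by
  induction t generalizing Δ with
  | lam b ih =>
    refine congrArg lam (ih _ _ fun B v => ?_)
    cases v with
    | vz => rfl
    | vs w => exact congrArg Varx.vs (h _ w)
  | var v => exact congrArg var (h _ v).symm
  | k => rfl
  | app _ _ ih₁ ih₂ => exact congrArg₂ app (ih₁ ρ ρ' h) (ih₂ ρ ρ' h)
  | pair _ _ ih₁ ih₂ => exact congrArg₂ pair (ih₁ ρ ρ' h) (ih₂ ρ ρ' h)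
  | p1 _ ih => exact congrArg p1 (ih ρ ρ' h)
  | p2 _ ih => exact congrArg p2 (ih ρ ρ' h)

theorem substA_shift (σ : ν → Tyx ν) (t : Tmx Γ A) :
    (t.shift (B := B)).substA σ = (t.substA σ).shift :=
  substA_rename σ t _ _ fun _ _ => rfl

theorem substA_subst (σ : ν → Tyx ν) (t : Tmx Γ A) (θ : Substx Γ Δ)
    (θ' : Substx (Γ.map (Tyx.substA σ)) (Δ.map (Tyx.substA σ)))
    (h : ∀ B (v : Varx Γ B), θ' _ (v.substA σ) = (θ B v).substA σ) :
    (t.subst θ).substA σ = (t.substA σ).subst θ' := by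
  induction t generalizing Δ with
  | lam b ih =>
    refine congrArg lam (ih _ _ fun B v => ?_)
    cases v with
    | vz => rfl
    | vs w => exact (congrArg shift (h _ w)).trans (substA_shift σ _).symm
  | var v => exact (h _ v).symm
  | k => rfl
  | app _ _ ih₁ ih₂ => exact congrArg₂ app (ih₁ θ θ' h) (ih₂ θ θ' h)
  | pair _ _ ih₁ ih₂ => exact congrArg₂ pair (ih₁ θ θ' h) (ih₂ θ θ' h)
  | p1 _ ih => exact congrArg p1 (ih θ θ' h)
  | p2 _ ih => exact congrArg p2 (ih θ θ' h)

theorem substA_subst1 (σ : ν → Tyx ν) (a : Tmx (A :: Γ) B) (b : Tmx Γ A) :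
    (a.subst1 b).substA σ = (a.substA σ).subst1 (b.substA σ) :=
  substA_subst σ a _ _ fun _ v => by cases v <;> rfl

end Tmx

namespace Eqvx

variable {a b : Tmx Γ A}

instance : Trans (Eqvx (Γ := Γ) (A := A)) Eqvx Eqvx := ⟨trans⟩

theorem of_eq (h : a = b) : Eqvx a b :=
  h ▸ refl a

theorem rename (h : Eqvx a b) (ρ : Renx Γ Δ) : Eqvx (a.rename ρ) (b.rename ρ) := by
  induction h generalizing Δ with
  | refl _ => exact refl _
  | symm _ ih => exact symm (ih ρ)
  | trans _ _ ih₁ ih₂ => exact trans (ih₁ ρ) (ih₂ ρ)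
  | congApp _ _ ih₁ ih₂ => exact congApp (ih₁ ρ) (ih₂ ρ)
  | congLam _ ih => exact congLam (ih _)
  | congPair _ _ ih₁ ih₂ => exact congPair (ih₁ ρ) (ih₂ ρ)
  | congP1 _ ih => exact congP1 (ih ρ)
  | congP2 _ ih => exact congP2 (ih ρ)
  | beta a b => exact Tmx.rename_subst1 a b ρ ▸ beta _ _
  | eta a =>
    exact trans (congLam (congApp (of_eq (Tmx.shift_rename_ext a ρ)) (refl _))) (eta _)
  | prodBeta1 _ _ => exact prodBeta1 _ _
  | prodBeta2 _ _ => exact prodBeta2 _ _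
  | prodEta _ => exact prodEta _
  | unit _ => exact unit _

theorem shift (h : Eqvx a b) : Eqvx (a.shift (B := B)) b.shift :=
  h.rename _

theorem substA (σ : ν → Tyx ν) (h : Eqvx a b) : Eqvx (a.substA σ) (b.substA σ) := by
  induction h with
  | refl _ => exact refl _
  | symm _ ih => exact symm ih
  | trans _ _ ih₁ ih₂ => exact trans ih₁ ih₂
  | congApp _ _ ih₁ ih₂ => exact congApp ih₁ ih₂
  | congLam _ ih => exact congLam ih
  | congPair _ _ ih₁ ih₂ => exact congPair ih₁ ih₂
  | congP1 _ ih => exact congP1 ih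
  | congP2 _ ih => exact congP2 ih
  | beta a b => exact Tmx.substA_subst1 σ a b ▸ beta _ _
  | eta a => exact trans (congLam (congApp (of_eq (Tmx.substA_shift σ a)) (refl _))) (eta _)
  | prodBeta1 _ _ => exact prodBeta1 _ _
  | prodBeta2 _ _ => exact prodBeta2 _ _
  | prodEta _ => exact prodEta _
  | unit _ => exact unit _

theorem of_lam {a b : Tmx (A :: Γ) B} (h : Eqvx a.lam b.lam) : Eqvx a b := by
  have app_shift_lam (t : Tmx (A :: Γ) B) : Eqvx (.app t.lam.shift (.var .vz)) t :=
    (beta _ _).trans (of_eq t.rename_ext_shift_subst1_var)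
  calc
    Eqvx a (.app a.lam.shift (.var .vz)) := (app_shift_lam a).symm
    Eqvx _ (.app b.lam.shift (.var .vz)) := congApp h.shift (refl _)
    Eqvx _ b := app_shift_lam b

theorem of_lamAll {a b : Tmx Γ A} (h : Eqvx a.lamAll b.lamAll) : Eqvx a b := by
  induction Γ generalizing A with
  | nil => exact h
  | cons _ _ ih => exact of_lam (ih h)

end Eqvx

/-! ### Normalization -/

namespace Tmx

mutual

/-- Neutral terms: eliminations of a variable, with normal arguments. -/
inductive IsNeutral : ∀ {Γ : Ctxx ν} {A : Tyx ν}, Tmx Γ A → Prop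
  | var {Γ : Ctxx ν} {A : Tyx ν} (v : Varx Γ A) : IsNeutral (.var v)
  | app {Γ : Ctxx ν} {A B : Tyx ν} {f : Tmx Γ (.arrow A B)} {a : Tmx Γ A} :
      IsNeutral f → IsNormal a → IsNeutral (.app f a)
  | p1 {Γ : Ctxx ν} {A B : Tyx ν} {a : Tmx Γ (.prod A B)} : IsNeutral a → IsNeutral (.p1 a)
  | p2 {Γ : Ctxx ν} {A B : Tyx ν} {a : Tmx Γ (.prod A B)} : IsNeutral a → IsNeutral (.p2 a)

/-- η-long β-normal forms: neutral terms are normal at atomic types only, and `k` is the only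
normal form of type `T`. -/
inductive IsNormal : ∀ {Γ : Ctxx ν} {A : Tyx ν}, Tmx Γ A → Prop
  | neutral {Γ : Ctxx ν} {x : ν} {a : Tmx Γ (.atom x)} : IsNeutral a → IsNormal a
  | lam {Γ : Ctxx ν} {A B : Tyx ν} {b : Tmx (A :: Γ) B} : IsNormal b → IsNormal (.lam b)
  | pair {Γ : Ctxx ν} {A B : Tyx ν} {a : Tmx Γ A} {b : Tmx Γ B} :
      IsNormal a → IsNormal b → IsNormal (.pair a b)
  | k {Γ : Ctxx ν} : IsNormal (.k (Γ := Γ))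

end

mutual

theorem IsNeutral.rename {Γ Δ : Ctxx ν} {A : Tyx ν} {t : Tmx Γ A} (ρ : Renx Γ Δ) :
    IsNeutral t → IsNeutral (t.rename ρ)
  | .var _ => .var _
  | .app hf ha => .app (hf.rename ρ) (ha.rename ρ)
  | .p1 ha => .p1 (ha.rename ρ)
  | .p2 ha => .p2 (ha.rename ρ)

theorem IsNormal.rename {Γ Δ : Ctxx ν} {A : Tyx ν} {t : Tmx Γ A} (ρ : Renx Γ Δ) :
    IsNormal t → IsNormal (t.rename ρ)
  | .neutral ha => .neutral (ha.rename ρ)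
  | .lam hb => .lam (hb.rename _)
  | .pair ha hb => .pair (ha.rename ρ) (hb.rename ρ)
  | .k => .k

end

/-- Tait's reducibility predicate, in the Kripke form that quantifies over all renamings at
function types. -/
def Reducible : ∀ (A : Tyx ν) {Γ : Ctxx ν}, Tmx Γ A → Prop
  | .atom _, _, t => ∃ n, IsNeutral n ∧ Eqvx t n
  | .unit, _, _ => True
  | .arrow A B, Γ, t => ∀ (Δ : Ctxx ν) (ρ : Renx Γ Δ) (u : Tmx Δ A), Reducible A u →
      Reducible B (.app (t.rename ρ) u)
  | .prod A B, _, t => Reducible A t.p1 ∧ Reducible B t.p2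

theorem Reducible.of_eqvx {t t' : Tmx Γ A} (h : Reducible A t') (e : Eqvx t t') :
    Reducible A t := by
  induction A generalizing Γ with
  | atom x =>
    obtain ⟨n, hn, en⟩ := h
    exact ⟨n, hn, e.trans en⟩
  | unit => trivial
  | arrow A B _ ih => exact fun Δ ρ u hu => ih (h Δ ρ u hu) (.congApp (e.rename ρ) (.refl u))
  | prod A B ih₁ ih₂ => exact ⟨ih₁ h.1 (.congP1 e), ih₂ h.2 (.congP2 e)⟩

theorem Reducible.rename {t : Tmx Γ A} (h : Reducible A t) (ρ : Renx Γ Δ) :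
    Reducible A (t.rename ρ) := by
  induction A generalizing Γ with
  | atom x =>
    obtain ⟨n, hn, en⟩ := h
    exact ⟨_, hn.rename ρ, en.rename ρ⟩
  | unit => trivial
  | arrow A B _ _ => exact fun Θ ρ' u hu => (rename_rename t ρ ρ').symm ▸ h Θ _ u hu
  | prod A B ih₁ ih₂ => exact ⟨ih₁ h.1 ρ, ih₂ h.2 ρ⟩

mutual

theorem Reducible.exists_isNormal : ∀ {A : Tyx ν} {Γ : Ctxx ν} {t : Tmx Γ A},
    Reducible A t → ∃ n, IsNormal n ∧ Eqvx t n
  | .atom _, _, _, ⟨n, hn, e⟩ => ⟨n, .neutral hn, e⟩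
  | .unit, _, t, _ => ⟨.k, .k, .unit t⟩
  | .arrow A _, Γ, t, h =>
    have ⟨n, hn, e⟩ := (h (A :: Γ) (fun _ => .vs) _ (IsNeutral.var .vz).reducible).exists_isNormal
    ⟨.lam n, .lam hn, (Eqvx.eta t).symm.trans (.congLam e)⟩
  | .prod _ _, _, t, h =>
    have ⟨n₁, hn₁, e₁⟩ := h.1.exists_isNormal
    have ⟨n₂, hn₂, e₂⟩ := h.2.exists_isNormal
    ⟨.pair n₁ n₂, .pair hn₁ hn₂, (Eqvx.prodEta t).symm.trans (.congPair e₁ e₂)⟩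

theorem IsNeutral.reducible : ∀ {A : Tyx ν} {Γ : Ctxx ν} {t : Tmx Γ A},
    IsNeutral t → Reducible A t
  | .atom _, _, t, h => ⟨t, h, .refl t⟩
  | .unit, _, _, _ => trivial
  | .arrow _ _, _, _, h => fun _ ρ _ hu =>
    have ⟨_, hn, e⟩ := hu.exists_isNormal
    (IsNeutral.app (h.rename ρ) hn).reducible.of_eqvx (.congApp (.refl _) e)
  | .prod _ _, _, _, h => ⟨h.p1.reducible, h.p2.reducible⟩

end

theorem subst_ext_rename_ext_subst1 (b : Tmx (A :: Γ) B) (θ : Substx Γ Δ) (ρ : Renx Δ Θ)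
    (u : Tmx Θ A) :
    ((b.subst (Substx.ext θ A)).rename (Renx.ext ρ A)).subst1 u =
      b.subst (Substx.cons u fun C v => (θ C v).rename ρ) := by
  rw [← subst_ext_subst1, rename_subst]
  congr 2
  funext C v
  cases v with
  | vz => rfl
  | vs w => exact shift_rename_ext _ _

theorem Reducible.subst (t : Tmx Γ A) {θ : Substx Γ Δ} (hθ : ∀ B v, Reducible B (θ B v)) :
    Reducible A (t.subst θ) := by
  induction t generalizing Δ with
  | var v => exact hθ _ v
  | app f a ihf iha =>
    have h := ihf hθ Δ (fun _ v => v) _ (iha hθ)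
    rwa [rename_eq_subst, subst_var] at h
  | lam b ih =>
    intro Θ ρ u hu
    refine Reducible.of_eqvx ?_ (Eqvx.beta _ _)
    rw [subst_ext_rename_ext_subst1]
    refine ih fun C v => ?_
    cases v with
    | vz => exact hu
    | vs w => exact (hθ _ w).rename ρ
  | pair a b iha ihb =>
    exact ⟨(iha hθ).of_eqvx (.prodBeta1 _ _), (ihb hθ).of_eqvx (.prodBeta2 _ _)⟩
  | p1 a ih => exact (ih hθ).1
  | p2 a ih => exact (ih hθ).2
  | k => trivial

theorem exists_isNormal_eqvx (t : Tmx Γ A) : ∃ n, IsNormal n ∧ Eqvx t n := by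
  have h := Reducible.subst t fun _ v => (IsNeutral.var v).reducible
  rw [subst_var] at h
  exact h.exists_isNormal

end Tmx

/-! ### Codes of normal forms -/

/-- The de Bruijn level of a variable: its distance from the outer end of the context, which,
unlike its index, does not change under a further binder. -/
def Varx.level : ∀ {Γ : Ctxx ν} {A : Tyx ν}, Varx Γ A → ℕ
  | _ :: Γ, _, .vz => Γ.length
  | _ :: _, _, .vs v => v.level

theorem Varx.level_lt_length (v : Varx Γ A) : v.level < Γ.length := by
  induction v with
  | vz => exact Nat.lt_succ_self _
  | vs _ ih => exact Nat.lt_succ_of_lt ih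

theorem Varx.sigma_eq_of_level_eq (v : Varx Γ A) (w : Varx Γ B) (h : v.level = w.level) :
    (⟨A, v⟩ : Σ A, Varx Γ A) = ⟨B, w⟩ := by
  induction v with
  | vz =>
    cases w with
    | vz => rfl
    | vs w => exact absurd h.symm w.level_lt_length.ne
  | vs v ih =>
    cases w with
    | vz => exact absurd h v.level_lt_length.ne
    | vs w =>
      cases ih w h
      rfl

namespace Tmx

/-- The code of a compound term: `tag` tells the term formers apart, `x` and `y` are the codes of
the immediate subterms, and the successor leaves `0` free to be the code of `k`. -/
def node (tag x y : ℕ) : ℕ :=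
  Nat.pair tag (Nat.pair x y) + 1

theorem node_inj {tag x y tag' x' y' : ℕ} :
    node tag x y = node tag' x' y' ↔ tag = tag' ∧ x = x' ∧ y = y' := by
  simp only [node, Nat.add_right_cancel_iff, Nat.pair_eq_pair]

theorem max_le_node (tag x y : ℕ) : max x y ≤ node tag x y :=
  calc
    max x y ≤ Nat.pair x y := max_le (Nat.left_le_pair x y) (Nat.right_le_pair x y)
    _ ≤ Nat.pair tag (Nat.pair x y) := Nat.right_le_pair _ _
    _ ≤ node tag x y := Nat.le_succ _

/-- Gödel numbering of terms. Types are not recorded. -/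
def code : ∀ {Γ : Ctxx ν} {A : Tyx ν}, Tmx Γ A → ℕ
  | _, _, .var v => node 0 0 v.level
  | _, _, .app f a => node 1 f.code a.code
  | _, _, .p1 a => node 2 0 a.code
  | _, _, .p2 a => node 3 0 a.code
  | _, _, .lam b => node 4 0 b.code
  | _, _, .pair a b => node 5 a.code b.code
  | _, _, .k => 0

mutual

theorem IsNeutral.sigma_eq_of_code_eq : ∀ {Γ : Ctxx ν} {A B : Tyx ν} {s : Tmx Γ A} {t : Tmx Γ B},
    IsNeutral s → IsNeutral t → s.code = t.code → (⟨A, s⟩ : Σ A, Tmx Γ A) = ⟨B, t⟩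
  | _, _, _, _, _, .var v, ht, h => by
    cases ht with
    | var w =>
      cases v.sigma_eq_of_level_eq w (node_inj.1 h).2.2
      rfl
    | _ => simp [code, node_inj] at h
  | _, _, _, _, _, .app hf ha, ht, h => by
    cases ht with
    | app hg hb =>
      obtain ⟨-, hfg, hab⟩ := node_inj.1 h
      cases hf.sigma_eq_of_code_eq hg hfg
      cases ha.eq_of_code_eq hb hab
      rfl
    | _ => simp [code, node_inj] at h
  | _, _, _, _, _, .p1 ha, ht, h => by
    cases ht with
    | p1 hb =>
      cases ha.sigma_eq_of_code_eq hb (node_inj.1 h).2.2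
      rfl
    | _ => simp [code, node_inj] at h
  | _, _, _, _, _, .p2 ha, ht, h => by
    cases ht with
    | p2 hb =>
      cases ha.sigma_eq_of_code_eq hb (node_inj.1 h).2.2
      rfl
    | _ => simp [code, node_inj] at h

theorem IsNormal.eq_of_code_eq : ∀ {Γ : Ctxx ν} {A : Tyx ν} {s t : Tmx Γ A},
    IsNormal s → IsNormal t → s.code = t.code → s = t
  | _, _, _, _, .neutral ha, ht, h => by
    cases ht with
    | neutral hb =>
      cases ha.sigma_eq_of_code_eq hb h
      rfl
  | _, _, _, _, .lam ha, .lam hb, h => congrArg lam (ha.eq_of_code_eq hb (node_inj.1 h).2.2)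
  | _, _, _, _, .pair ha ha', .pair hb hb', h =>
    have ⟨_, hab, hab'⟩ := node_inj.1 h
    congrArg₂ pair (ha.eq_of_code_eq hb hab) (ha'.eq_of_code_eq hb' hab')
  | _, _, _, _, .k, .k, _ => rfl

end

end Tmx

/-! ### Numerals -/

/-- The type `C × (C × ⋯ (C × C))` of `(n + 1)`-tuples, nested to the right. -/
def Tyx.tuple (C : Tyx ν) : ℕ → Tyx ν
  | 0 => C
  | n + 1 => .prod C (C.tuple n)

/-- The type of the numerals `0, …, N`, where `i` is represented as the `i`-th projection from
`C^(N+1)` to `C`. -/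
abbrev Tyx.num (C : Tyx ν) (N : ℕ) : Tyx ν :=
  .arrow (C.tuple N) C

namespace Tmx

variable {N : ℕ}

/-- The `i`-th component of an `(n + 1)`-tuple, counted from `0`; it is the last one if `n < i`. -/
def proj : ∀ (n : ℕ), ℕ → Tmx Γ (C.tuple n) → Tmx Γ C
  | 0, _, t => t
  | _ + 1, 0, t => .p1 t
  | n + 1, i + 1, t => proj n i (.p2 t)

/-- The tuple with components `f 0, …, f n`. -/
def tuple : ∀ (n : ℕ), (ℕ → Tmx Γ C) → Tmx Γ (C.tuple n)
  | 0, f => f 0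
  | n + 1, f => .pair (f 0) (tuple n fun i => f (i + 1))

theorem proj_min (n i : ℕ) (t : Tmx Γ (C.tuple n)) : proj n (min i n) t = proj n i t := by
  induction n generalizing i with
  | zero => rfl
  | succ n ih =>
    cases i with
    | zero => rw [Nat.zero_min]
    | succ i =>
      rw [Nat.add_min_add_right]
      exact ih i (.p2 t)

theorem proj_congr (n i : ℕ) {t t' : Tmx Γ (C.tuple n)} (h : Eqvx t t') :
    Eqvx (proj n i t) (proj n i t') := by
  induction n generalizing i with
  | zero => exact h
  | succ n ih =>
    cases i with
    | zero => exact .congP1 h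
    | succ i => exact ih i (.congP2 h)

theorem tuple_congr (n : ℕ) {f g : ℕ → Tmx Γ C} (h : ∀ i, Eqvx (f i) (g i)) :
    Eqvx (tuple n f) (tuple n g) := by
  induction n generalizing f g with
  | zero => exact h 0
  | succ n ih => exact .congPair (h 0) (ih fun i => h (i + 1))

theorem proj_tuple (n i : ℕ) (f : ℕ → Tmx Γ C) : Eqvx (proj n i (tuple n f)) (f (min i n)) := by
  induction n generalizing i f with
  | zero => exact .of_eq (congrArg f (Nat.min_zero i).symm)
  | succ n ih =>
    cases i with
    | zero =>
      rw [Nat.zero_min]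
      exact .prodBeta1 _ _
    | succ i =>
      rw [Nat.add_min_add_right]
      exact (proj_congr n i (.prodBeta2 _ _)).trans (ih i fun i => f (i + 1))

theorem proj_subst (n i : ℕ) (t : Tmx Γ (C.tuple n)) (θ : Substx Γ Δ) :
    (proj n i t).subst θ = proj n i (t.subst θ) := by
  induction n generalizing i with
  | zero => rfl
  | succ n ih =>
    cases i with
    | zero => rfl
    | succ i => exact ih i (.p2 t)

theorem tuple_subst (n : ℕ) (f : ℕ → Tmx Γ C) (θ : Substx Γ Δ) :
    (tuple n f).subst θ = tuple n fun i => (f i).subst θ := by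
  induction n generalizing f with
  | zero => rfl
  | succ n ih => exact congrArg (pair _) (ih fun i => f (i + 1))

/-- The numeral `i`; numerals saturate, so that it is the numeral `N` if `N < i`. -/
def num (i : ℕ) : Tmx Γ (C.num N) :=
  .lam (proj N i (.var .vz))

theorem num_eq_num {i j : ℕ} (h : min i N = min j N) : (num i : Tmx Γ (C.num N)) = num j := by
  rw [num, ← proj_min, h, proj_min, num]

theorem num_subst (i : ℕ) (θ : Substx Γ Δ) : (num i : Tmx Γ (C.num N)).subst θ = num i :=
  congrArg lam (proj_subst N i _ _)

theorem num_shift (i : ℕ) : (num i : Tmx Γ (C.num N)).shift (B := A) = num i := by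
  rw [shift, rename_eq_subst, num_subst]

theorem num_app_tuple (i : ℕ) (f : ℕ → Tmx Γ C) : Eqvx (.app (num i) (tuple N f)) (f (min i N)) :=
  calc
    Eqvx (.app (num i) (tuple N f)) ((proj N i (.var .vz)).subst1 (tuple N f)) := .beta _ _
    _ = proj N i (tuple N f) := proj_subst N i _ _
    Eqvx _ (f (min i N)) := proj_tuple N i f

/-- The operation on numerals that represents `f`, tabulated as a matrix of projections. -/
def numOp (f : ℕ → ℕ → ℕ) (s t : Tmx Γ (C.num N)) : Tmx Γ (C.num N) :=
  .lam (.app s.shift (tuple N fun i => .app t.shift (tuple N fun j => proj N (f i j) (.var .vz))))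

theorem numOp_subst (f : ℕ → ℕ → ℕ) (s t : Tmx Γ (C.num N)) (θ : Substx Γ Δ) :
    (numOp f s t).subst θ = numOp f (s.subst θ) (t.subst θ) := by
  simp only [numOp, subst, tuple_subst, proj_subst, shift_subst_ext, Substx.ext]

theorem numOp_congr (f : ℕ → ℕ → ℕ) {s s' t t' : Tmx Γ (C.num N)} (hs : Eqvx s s')
    (ht : Eqvx t t') : Eqvx (numOp f s t) (numOp f s' t') :=
  .congLam (.congApp hs.shift (tuple_congr N fun _ => .congApp ht.shift (.refl _)))

theorem min_apply_min_min {f : ℕ → ℕ → ℕ} (hf : ∀ i j, max i j ≤ f i j) (N i j : ℕ) :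
    min (f (min i N) (min j N)) N = min (f i j) N := by
  by_cases h : i ≤ N ∧ j ≤ N
  · rw [min_eq_left h.1, min_eq_left h.2]
  · have le_left := hf i j
    have le_right := hf (min i N) (min j N)
    omega

-- An inflationary operation is compatible with saturation: once an argument exceeds `N`, so does
-- the value.
theorem numOp_num {f : ℕ → ℕ → ℕ} (hf : ∀ i j, max i j ≤ f i j) {s t : Tmx Γ (C.num N)} {i j : ℕ}
    (hs : Eqvx s (num i)) (ht : Eqvx t (num j)) : Eqvx (numOp f s t) (num (f i j)) := by
  have eval : Eqvx (numOp f (num i) (num j : Tmx Γ (C.num N))) (num (f (min i N) (min j N))) := by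
    simp only [numOp, num_shift]
    exact .congLam ((num_app_tuple i _).trans (num_app_tuple j _))
  rw [← num_eq_num (min_apply_min_min hf N i j)]
  exact (numOp_congr f hs ht).trans eval

end Tmx

/-! ### Normalization by evaluation inside the calculus -/

/-- The type of functions from levels to codes. Such a function represents a term not yet placed
in a context: at level `l` it gives the code of the term in a context of length `l`. -/
abbrev Tyx.family (C : Tyx ν) (N : ℕ) : Tyx ν :=
  .arrow (C.num N) (C.num N)

/-- The type-instance that replaces every atomic type by `C.family N`. -/
abbrev Tyx.famInst (A C : Tyx ν) (N : ℕ) : Tyx ν :=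
  A.substA fun _ => C.family N

namespace Tmx

variable {N : ℕ}

/-- The family `u` takes the value `n` at level `l`. -/
def HasValueAt (u : Tmx Γ (C.family N)) (l n : ℕ) : Prop :=
  Eqvx (u.app (num l)) (num n)

theorem HasValueAt.of_eqvx {u u' : Tmx Γ (C.family N)} {l n : ℕ} (h : HasValueAt u' l n)
    (e : Eqvx u u') : HasValueAt u l n :=
  (Eqvx.congApp e (.refl _)).trans h

/-- The family with constant value `n`. -/
def const (n : ℕ) : Tmx Γ (C.family N) :=
  .lam (num n)

theorem const_subst (n : ℕ) (θ : Substx Γ Δ) : (const n : Tmx Γ (C.family N)).subst θ = const n :=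
  congrArg lam (num_subst n _)

theorem hasValueAt_const (n l : ℕ) : HasValueAt (const n : Tmx Γ (C.family N)) l n :=
  (Eqvx.beta _ _).trans (.of_eq (num_subst n _))

/-- The family of a variable of level `l`. -/
def varFamily (l : Tmx Γ (C.num N)) : Tmx Γ (C.family N) :=
  .lam (numOp (node 0) (num 0) l.shift)

theorem varFamily_subst (l : Tmx Γ (C.num N)) (θ : Substx Γ Δ) :
    (varFamily l).subst θ = varFamily (l.subst θ) := by
  simp only [varFamily, subst, numOp_subst, num_subst, shift_subst_ext]

theorem hasValueAt_varFamily (i l : ℕ) :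
    HasValueAt (varFamily (num i) : Tmx Γ (C.family N)) l (node 0 0 i) := by
  refine (Eqvx.beta _ _).trans ?_
  simp only [subst1, numOp_subst, num_shift, num_subst]
  exact numOp_num (max_le_node 0) (.refl _) (.refl _)

/-- Level-wise application of an operation to two families. -/
def familyOp (f : ℕ → ℕ → ℕ) (u v : Tmx Γ (C.family N)) : Tmx Γ (C.family N) :=
  .lam (numOp f (.app u.shift (.var .vz)) (.app v.shift (.var .vz)))

theorem familyOp_subst (f : ℕ → ℕ → ℕ) (u v : Tmx Γ (C.family N)) (θ : Substx Γ Δ) :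
    (familyOp f u v).subst θ = familyOp f (u.subst θ) (v.subst θ) := by
  simp only [familyOp, subst, numOp_subst, shift_subst_ext, Substx.ext]

theorem familyOp_congr (f : ℕ → ℕ → ℕ) {u u' v v' : Tmx Γ (C.family N)} (hu : Eqvx u u')
    (hv : Eqvx v v') : Eqvx (familyOp f u v) (familyOp f u' v') :=
  .congLam (numOp_congr f (.congApp hu.shift (.refl _)) (.congApp hv.shift (.refl _)))

theorem HasValueAt.familyOp {f : ℕ → ℕ → ℕ} (hf : ∀ i j, max i j ≤ f i j)
    {u v : Tmx Γ (C.family N)} {l i j : ℕ} (hu : HasValueAt u l i) (hv : HasValueAt v l j) :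
    HasValueAt (familyOp f u v) l (f i j) := by
  refine (Eqvx.beta _ _).trans ?_
  simp only [subst1, numOp_subst, subst, shift_subst_cons, subst_var]
  exact numOp_num hf hu hv

/-- The family of an abstraction. The body `u` depends on the level at which the abstracted
variable is introduced, and is evaluated one level higher. -/
def lamFamily (u : Tmx (C.num N :: Γ) (C.family N)) : Tmx Γ (C.family N) :=
  .lam (numOp (node 4) (num 0) (.app u (numOp (fun i j => i + j + 1) (.var .vz) (num 0))))

theorem lamFamily_subst (u : Tmx (C.num N :: Γ) (C.family N)) (θ : Substx Γ Δ) :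
    (lamFamily u).subst θ = lamFamily (u.subst (Substx.ext θ _)) := by
  simp only [lamFamily, subst, numOp_subst, num_subst, Substx.ext]

theorem lamFamily_congr {u u' : Tmx (C.num N :: Γ) (C.family N)} (h : Eqvx u u') :
    Eqvx (lamFamily u) (lamFamily u') :=
  .congLam (numOp_congr _ (.refl _) (.congApp h (.refl _)))

theorem HasValueAt.lamFamily {u : Tmx (C.num N :: Γ) (C.family N)} {l n : ℕ}
    (hu : HasValueAt (u.subst1 (num l)) (l + 1) n) : HasValueAt (lamFamily u) l (node 4 0 n) := by
  refine (Eqvx.beta _ _).trans ?_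
  simp only [subst1, numOp_subst, subst, num_subst]
  have succ : Eqvx (numOp (fun i j => i + j + 1) (num l) (num 0 : Tmx Γ (C.num N)))
      (num (l + 1)) :=
    numOp_num (fun i j => by omega) (.refl _) (.refl _)
  exact numOp_num (max_le_node 4) (.refl _) ((Eqvx.congApp (.refl _) succ).trans hu)

mutual

/-- Reification: the family of codes of the normal forms of a term of an instantiated type. -/
def reify : ∀ (A : Tyx ν) {Γ : Ctxx ν}, Tmx Γ (A.famInst C N) → Tmx Γ (C.family N)
  | .atom _, _, t => t
  | .unit, _, _ => const 0
  | .prod A B, _, t => familyOp (node 5) (reify A (.p1 t)) (reify B (.p2 t))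
  | .arrow A B, _, t => lamFamily (reify B (.app (shift t) (reflect A (varFamily (.var .vz)))))

/-- Reflection: the value of an instantiated type that stands for a neutral term with the given
family of codes. -/
def reflect : ∀ (A : Tyx ν) {Γ : Ctxx ν}, Tmx Γ (C.family N) → Tmx Γ (A.famInst C N)
  | .atom _, _, u => u
  | .unit, _, _ => .k
  | .prod A B, _, u =>
      .pair (reflect A (familyOp (node 2) (const 0) u)) (reflect B (familyOp (node 3) (const 0) u))
  | .arrow A B, _, u => .lam (reflect B (familyOp (node 1) u.shift (reify A (.var .vz))))

end

mutual

theorem reify_subst : ∀ (A : Tyx ν) {Γ Δ : Ctxx ν} (t : Tmx Γ (A.famInst C N)) (θ : Substx Γ Δ),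
    (reify A t).subst θ = reify A (t.subst θ)
  | .atom _, _, _, _, _ => rfl
  | .unit, _, _, _, θ => const_subst 0 θ
  | .prod A B, _, _, t, θ => by
    simp only [reify, familyOp_subst, reify_subst A, reify_subst B]
    rfl
  | .arrow A B, _, _, t, θ => by
    simp only [reify, lamFamily_subst, reify_subst B, reflect_subst A, varFamily_subst, subst,
      Substx.ext]
    exact congrArg (fun f => lamFamily (reify B (.app f _))) (shift_subst_ext t θ)

theorem reflect_subst : ∀ (A : Tyx ν) {Γ Δ : Ctxx ν} (u : Tmx Γ (C.family N)) (θ : Substx Γ Δ),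
    (reflect A u).subst θ = reflect A (u.subst θ)
  | .atom _, _, _, _, _ => rfl
  | .unit, _, _, _, _ => rfl
  | .prod A B, _, _, u, θ => by
    simp only [reflect, subst, reflect_subst A, reflect_subst B, familyOp_subst, const_subst]
    rfl
  | .arrow A B, _, _, u, θ => by
    simp only [reflect, subst, reflect_subst B, familyOp_subst, reify_subst A, shift_subst_ext,
      Substx.ext]
    rfl

end

mutual

theorem reify_congr : ∀ (A : Tyx ν) {Γ : Ctxx ν} {t t' : Tmx Γ (A.famInst C N)},
    Eqvx t t' → Eqvx (reify A t) (reify A t')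
  | .atom _, _, _, _, h => h
  | .unit, _, _, _, _ => .refl _
  | .prod A B, _, _, _, h =>
    familyOp_congr _ (reify_congr A (.congP1 h)) (reify_congr B (.congP2 h))
  | .arrow _ B, _, _, _, h => lamFamily_congr (reify_congr B (.congApp h.shift (.refl _)))

theorem reflect_congr : ∀ (A : Tyx ν) {Γ : Ctxx ν} {u u' : Tmx Γ (C.family N)},
    Eqvx u u' → Eqvx (reflect A u) (reflect A u')
  | .atom _, _, _, _, h => h
  | .unit, _, _, _, _ => .refl _
  | .prod A B, _, _, _, h =>
    .congPair (reflect_congr A (familyOp_congr _ (.refl _) h))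
      (reflect_congr B (familyOp_congr _ (.refl _) h))
  | .arrow _ B, _, _, _, h => .congLam (reflect_congr B (familyOp_congr _ h.shift (.refl _)))

end

theorem reflect_app (u : Tmx Γ (C.family N)) (x : Tmx Γ (A.famInst C N)) :
    Eqvx (Tmx.app (B := B.famInst C N) (reflect (.arrow A B) u) x)
      (reflect B (familyOp (node 1) u (reify A x))) := by
  refine (Eqvx.beta _ _).trans (.of_eq ?_)
  simp only [subst1, reflect_subst, familyOp_subst, reify_subst, shift_subst_cons, subst_var, subst,
    Substx.cons]

theorem HasValueAt.reify_arrow {t : Tmx Γ (.arrow (A.famInst C N) (B.famInst C N))} {l n : ℕ}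
    (h : HasValueAt (reify B (.app t (reflect A (varFamily (num l))))) (l + 1) n) :
    HasValueAt (reify (.arrow A B) t) l (node 4 0 n) := by
  refine HasValueAt.lamFamily ?_
  simpa only [subst1, reify_subst, subst, shift_subst_cons, subst_var, reflect_subst,
    varFamily_subst, Substx.cons] using h

/-- The substitution `θ` sends each variable to the reflection of a family that takes the code of
that variable at every level. -/
def IsValuation (θ : Substx (Γ.map fun A => A.famInst C N) Δ) : Prop :=
  ∀ B (v : Varx Γ B), ∃ u : Tmx Δ (C.family N),
    Eqvx (θ _ (v.substA _)) (reflect B u) ∧ ∀ l, HasValueAt u l (code (.var v))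

theorem IsValuation.cons {θ : Substx (Γ.map fun A => A.famInst C N) Δ} (hθ : IsValuation θ) :
    IsValuation (Γ := A :: Γ)
      (Substx.cons (reflect A (varFamily (num Γ.length))) θ) := by
  intro B v
  cases v with
  | vz => exact ⟨_, .refl _, hasValueAt_varFamily _⟩
  | vs w => exact hθ _ w

mutual

theorem IsNeutral.exists_eqvx_reflect {Γ Δ : Ctxx ν} {A : Tyx ν} {t : Tmx Γ A}
    {θ : Substx (Γ.map fun A => A.famInst C N) Δ} (hθ : IsValuation θ) :
    IsNeutral t → ∃ u : Tmx Δ (C.family N),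
      Eqvx ((t.substA _).subst θ) (reflect A u) ∧ HasValueAt u Γ.length t.code
  | .var v =>
    have ⟨u, hu, hcode⟩ := hθ _ v
    ⟨u, hu, hcode _⟩
  | .app hf ha =>
    have ⟨u, hu, hcode⟩ := hf.exists_eqvx_reflect hθ
    ⟨_, (Eqvx.congApp hu (.refl _)).trans (reflect_app u _),
      hcode.familyOp (max_le_node 1) (ha.hasValueAt_reify hθ)⟩
  | .p1 ha =>
    have ⟨_, hu, hcode⟩ := ha.exists_eqvx_reflect hθ
    ⟨_, (Eqvx.congP1 hu).trans (.prodBeta1 _ _),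
      (hasValueAt_const 0 _).familyOp (max_le_node 2) hcode⟩
  | .p2 ha =>
    have ⟨_, hu, hcode⟩ := ha.exists_eqvx_reflect hθ
    ⟨_, (Eqvx.congP2 hu).trans (.prodBeta2 _ _),
      (hasValueAt_const 0 _).familyOp (max_le_node 3) hcode⟩

theorem IsNormal.hasValueAt_reify {Γ Δ : Ctxx ν} {A : Tyx ν} {t : Tmx Γ A}
    {θ : Substx (Γ.map fun A => A.famInst C N) Δ} (hθ : IsValuation θ) :
    IsNormal t → HasValueAt (reify A ((t.substA _).subst θ)) Γ.length t.code
  | .neutral ha =>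
    have ⟨_, hu, hcode⟩ := ha.exists_eqvx_reflect hθ
    hcode.of_eqvx hu
  | .lam hb =>
    .reify_arrow ((hb.hasValueAt_reify hθ.cons).of_eqvx
      (reify_congr _ ((Eqvx.beta _ _).trans (.of_eq (subst_ext_subst1 _ _ _)))))
  | .pair ha hb =>
    ((ha.hasValueAt_reify hθ).of_eqvx (reify_congr _ (.prodBeta1 _ _))).familyOp (max_le_node 5)
      ((hb.hasValueAt_reify hθ).of_eqvx (reify_congr _ (.prodBeta2 _ _)))
  | .k => hasValueAt_const 0 _

end

theorem hasValueAt_reify_wk {a n : Tmx [] A} (hn : IsNormal n) (e : Eqvx a n) :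
    HasValueAt (reify A ((a.substA fun _ => C.family N).wk (Δ := Δ))) 0 n.code := by
  have value := IsNormal.hasValueAt_reify (Γ := []) (C := C) (N := N) (Δ := Δ)
    (θ := fun _ v => .var v.elim0) (fun _ v => v.elim0) hn
  rw [← rename_eq_subst] at value
  exact value.of_eqvx (reify_congr A ((e.substA _).rename _))

/-! ### Interpolation -/

/-- A single term of the calculus sends each of the closed terms `a i` to `c i`. -/
def Interpolates {ι : Type*} (a : ι → Tmx [] A) (c : ι → Tmx Δ C) : Prop :=
  ∃ h : Tmx Δ (.arrow A C), ∀ i, Eqvx (h.app (a i).wk) (c i)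

theorem exists_interpolates_substA {ι : Type*} [Finite ι] [Nonempty ι] {a : ι → Tmx [] A}
    (ha : Pairwise fun i j => ¬ Eqvx (a i) (a j)) (c : ι → Tmx Δ C) :
    ∃ σ : ν → Tyx ν, Interpolates (fun i => (a i).substA σ) c := by
  choose n hn e using fun i => exists_isNormal_eqvx (a i)
  have code_injective : Function.Injective fun i => (n i).code := fun i j hij => by
    by_contra hne
    exact ha hne ((e i).trans ((hn i).eq_of_code_eq (hn j) hij ▸ (e j).symm))
  obtain ⟨N, hN⟩ := Set.finite_range (fun i => (n i).code) |>.bddAbove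
  let table : ℕ → Tmx Δ C :=
    Function.extend (fun i => (n i).code) c fun _ => c (Classical.arbitrary ι)
  refine ⟨fun _ => C.family N,
    .lam (.app (.app (reify A (.var .vz)) (num 0)) (tuple N table).shift), fun i => ?_⟩
  have beta (x : Tmx Δ (A.famInst C N)) :
      Eqvx (Tmx.app (.lam (.app (.app (reify A (.var .vz)) (num 0)) (tuple N table).shift)) x)
        (.app (.app (reify A x) (num 0)) (tuple N table)) := by
    refine (Eqvx.beta _ _).trans (.of_eq ?_)
    simp only [subst1, subst, reify_subst, num_subst, shift_subst_cons, subst_var, Substx.cons]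
  calc
    Eqvx _ (.app (.app (reify A ((a i).substA _).wk) (num 0)) (tuple N table)) := beta _
    Eqvx _ (.app (num (n i).code) (tuple N table)) :=
      .congApp (hasValueAt_reify_wk (hn i) (e i)) (.refl _)
    Eqvx _ (table (min (n i).code N)) := num_app_tuple _ _
    _ = table (n i).code := by rw [min_eq_left (hN ⟨i, rfl⟩)]
    _ = c i := code_injective.extend_apply _ _ i

theorem Interpolates.lamAll_substA {ι : Type*} {σ : ν → Tyx ν} {a : ι → Tmx Γ A}
    {c : ι → Tmx Δ C} (h : Interpolates (fun i => (a i).lamAll.substA σ) c) :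
    Interpolates (fun i => ((a i).substA σ).lamAll) c := by
  induction Γ generalizing A with
  | nil => exact h
  | cons _ _ ih => exact ih (a := fun i => (a i).lam) h

end Tmx

theorem boehm_lambda_products_general {ι : Type*} [Finite ι] [Nonempty ι] {a : ι → Tmx Γ A}
    (ha : Pairwise fun i j => ¬ Eqvx (a i) (a j)) (c : ι → Tmx Δ C) :
    ∃ σ : ν → Tyx ν, Tmx.Interpolates (fun i => ((a i).substA σ).lamAll) c := by
  obtain ⟨σ, hσ⟩ := Tmx.exists_interpolates_substA (a := fun i => (a i).lamAll)
    (ha.mono fun _ _ hne h => hne (.of_lamAll h)) c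
  exact ⟨σ, hσ.lamAll_substA⟩

/--
**Theorem 9.1 (analogue of Böhm's Theorem for Λ×).** If `a` and `b` are of the same
type and `a = b` is not provable in Λ×, then for every two terms `c` and `d` of the
same type of Λ× one can construct type-instances `a′` and `b′` of `a` and `b`
respectively, terms `h, h₁, …, hₙ` (`n ≥ 0`), and also find variables `x₁, …, xₘ`
(`m ≥ 0`, here: all the free variables of `a` and `b`, i.e. the context `Γ`) and a
natural number `i` such that `π^i(h λx₁…xₘ.a′)h₁…hₙ = c` and
`π^i(h λx₁…xₘ.b′)h₁…hₙ = d` are provable in Λ×.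
-/
theorem boehm_lambda_products {ν : Type} {Γ : Ctxx ν} {A : Tyx ν}
    (a b : Tmx Γ A) (hne : ¬ Eqvx a b) {Δ : Ctxx ν} {C : Tyx ν} (c d : Tmx Δ C) :
    ∃ (σ : ν → Tyx ν) (G : Tyx ν)
      (h : Tmx Δ (Tyx.arrow (Tyx.arrs (Γ.map (Tyx.substA σ)) (A.substA σ)) G))
      (Bs : List (Tyx ν)) (hs : HListx Δ Bs) (n i : ℕ)
      (ua ub : Tmx Δ (Tyx.arrsR Bs C)),
      PiStep n i (h.app (Tmx.lamAll (a.substA σ)).wk) ua ∧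
      PiStep n i (h.app (Tmx.lamAll (b.substA σ)).wk) ub ∧
      Eqvx (ua.apps hs) c ∧ Eqvx (ub.apps hs) d := by
  have pairwise_ne : Pairwise fun i j => ¬ Eqvx (bif i then a else b) (bif j then a else b) := by
    rintro (_ | _) (_ | _) hij
    exacts [absurd rfl hij, fun h => hne h.symm, hne, absurd rfl hij]
  obtain ⟨σ, h, hab⟩ := boehm_lambda_products_general (a := (bif · then a else b))
    (c := (bif · then c else d)) pairwise_ne
  exact ⟨σ, C, h, [], .nil, 1, 1, _, _, .one _, .one _, hab true, hab false⟩
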